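/- arXiv:1801.01054 — 2 statements merged into one kernel-verified Lean document; each statement's English description precedes it below -/
import Mathlib

section
/- Let h = 2^d with d ∈ ℕ and w ≥ 2. The self-intersection measure of the FHT pattern set satisfies r(H_{h,w}) = h; that is, for every nonempty subfamily ℳ ⊆ H_{h,w}, |ℳ| · |⋂_{T∈ℳ} T| ≤ h, and this value is attained (by a single pattern). -/
/-!
FHT patterns. Pixels are pairs `(i, j) : ℕ × ℕ` (row `i`, column `j`).
-/

/-- Width-cyclic translation `tran_{a,b}`: shift rows up by `a` and columns by `b`
cyclically modulo the image width `w`. -/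
def tran (w a b : ℕ) (T : Finset (ℕ × ℕ)) : Finset (ℕ × ℕ) :=
  T.image fun p => (p.1 + a, (p.2 + b) % w)

/-- The column of the (unique, for FHT patterns) pixel of `T` in row `i`. -/
def colAt (T : Finset (ℕ × ℕ)) (i : ℕ) : ℕ :=
  ((T.filter fun p => p.1 = i).image Prod.snd).sup id

/-- Horizontal span `Δ(T) = (j_top - j_bot) mod w` of a pattern of height `h`. -/
def span (w h : ℕ) (T : Finset (ℕ × ℕ)) : ℕ :=
  (colAt T (h - 1) + w - colAt T 0) % w

/-- The FHT pattern sets `H_k` (mostly vertical, inclined to the right) at image width `w`: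
`H_0` consists of the single bottom pixels, and `H_{k}` is obtained by stacking a translated
copy of each `T ∈ H_{k-1}` on top of itself, with horizontal shift `Δ(T) + s`, `s ∈ {0, 1}`.
`H_{h,w}` for `h = 2 ^ d` is `FHT w d`. -/
def FHT (w : ℕ) : ℕ → Finset (Finset (ℕ × ℕ))
  | 0 => (Finset.range w).image fun j => ({(0, j)} : Finset (ℕ × ℕ))
  | k + 1 =>
      ((FHT w k) ×ˢ ({0, 1} : Finset ℕ)).image
        fun q => q.1 ∪ tran w (2 ^ k) (span w (2 ^ k) q.1 + q.2) q.1

/-- The common intersection `⋂_{T ∈ M} T` of a family of patterns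
(equal to `∅` when `M` is empty). -/
def interF (M : Finset (Finset (ℕ × ℕ))) : Finset (ℕ × ℕ) :=
  (M.sup id).filter fun p => ∀ T ∈ M, p ∈ T

/-!
Split a pattern of height `2n` into its lower and upper half. The lower half and the shift bit `s`
determine the pattern, and so do the upper half and `s`, because the span is invariant under
translation; so the lower halves of a family number at least half as many as its members, and so
do the upper halves.
Two distinct patterns with the same lower half have upper halves that are distinct translates of
each other, hence disjoint, and symmetrically. So if the common intersection has pixels in
both halves, passing to either half is injective on the family and the two inductive bounds add up.
If it lies in one half, the inductive bound for that half loses at most a factor of two.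
-/

section Tran

variable {w a b a' b' : ℕ} {S T : Finset (ℕ × ℕ)} {p : ℕ × ℕ}

theorem mem_tran : p ∈ tran w a b T ↔ ∃ q ∈ T, (q.1 + a, (q.2 + b) % w) = p :=
  Finset.mem_image

theorem mk_mem_tran (hp : p ∈ T) : (p.1 + a, (p.2 + b) % w) ∈ tran w a b T :=
  Finset.mem_image_of_mem _ hp

theorem tran_union : tran w a b (S ∪ T) = tran w a b S ∪ tran w a b T :=
  Finset.image_union S T

theorem tran_tran : tran w a b (tran w a' b' T) = tran w (a' + a) (b' + b) T := by
  simp only [tran, Finset.image_image, Function.comp_def, Nat.mod_add_mod, add_assoc]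

theorem tran_congr (h : b ≡ b' [MOD w]) : tran w a b T = tran w a b' T :=
  Finset.image_congr fun p _ => congrArg (p.1 + a, ·) (h.add_left p.2)

theorem subset_of_tran_subset_tran (hS : ∀ p ∈ S, p.2 < w) (hT : ∀ p ∈ T, p.2 < w)
    (h : tran w a b S ⊆ tran w a b T) : S ⊆ T := by
  intro p hp
  obtain ⟨q, hq, hqp⟩ := mem_tran.1 (h (mk_mem_tran hp))
  obtain ⟨hrow, hcol⟩ := Prod.mk.inj hqp
  have hcol : q.2 ≡ p.2 [MOD w] := Nat.ModEq.add_right_cancel' b hcol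
  rwa [← Prod.ext (Nat.add_right_cancel hrow) (hcol.eq_of_lt_of_lt (hT q hq) (hS p hp))]

theorem tran_injOn : Set.InjOn (tran w a b) {T | ∀ p ∈ T, p.2 < w} := fun _ hS _ hT h =>
  (subset_of_tran_subset_tran hS hT h.subset).antisymm
    (subset_of_tran_subset_tran hT hS h.superset)

end Tran

/-- A pattern of height `n` whose bottom row is row `0`, in an image of width `w`: a set with
exactly one pixel in each of the rows `0, …, n - 1`. -/
structure IsPattern (w n : ℕ) (T : Finset (ℕ × ℕ)) : Prop where
  row_lt : ∀ p ∈ T, p.1 < n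
  col_lt : ∀ p ∈ T, p.2 < w
  existsUnique_col : ∀ i < n, ∃! j, (i, j) ∈ T

namespace IsPattern

variable {w n a b c i j j' : ℕ} {T : Finset (ℕ × ℕ)} {p : ℕ × ℕ}

theorem col_eq (hT : IsPattern w n T) (hj : (i, j) ∈ T) (hj' : (i, j') ∈ T) : j = j' :=
  (hT.existsUnique_col i (hT.row_lt _ hj)).unique hj hj'

theorem colAt_eq (hT : IsPattern w n T) (hj : (i, j) ∈ T) : colAt T i = j := by
  have hrow : T.filter (fun p => p.1 = i) = {(i, j)} := by
    ext ⟨i', j'⟩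
    simp only [Finset.mem_filter, Finset.mem_singleton, Prod.mk.injEq]
    constructor
    · rintro ⟨hj', rfl⟩
      exact ⟨rfl, hT.col_eq hj' hj⟩
    · rintro ⟨rfl, rfl⟩
      exact ⟨hj, rfl⟩
  simp only [colAt, hrow, Finset.image_singleton, Finset.sup_singleton, id]

theorem colAt_mem (hT : IsPattern w n T) (hi : i < n) : (i, colAt T i) ∈ T := by
  obtain ⟨j, hj⟩ := (hT.existsUnique_col i hi).exists
  rwa [hT.colAt_eq hj]

theorem card_eq (hT : IsPattern w n T) : T.card = n := by
  refine (Finset.card_nbij Prod.fst (fun p hp => Finset.mem_range.2 (hT.row_lt p hp))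
    ?_ ?_).trans (Finset.card_range n)
  · rintro ⟨i, j⟩ hp ⟨_, j'⟩ hq rfl
    rw [hT.col_eq hp hq]
  · intro i hi
    exact ⟨_, hT.colAt_mem (Finset.mem_range.1 hi), rfl⟩

protected theorem tran (hT : IsPattern w n T) (b : ℕ) : IsPattern w n (tran w 0 b T) where
  row_lt p hp := by
    obtain ⟨q, hq, rfl⟩ := mem_tran.1 hp
    exact hT.row_lt q hq
  col_lt p hp := by
    obtain ⟨q, hq, rfl⟩ := mem_tran.1 hp
    exact Nat.mod_lt _ (Nat.zero_lt_of_lt (hT.col_lt q hq))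
  existsUnique_col i hi := by
    refine ⟨_, mk_mem_tran (hT.colAt_mem hi), fun j hj => ?_⟩
    obtain ⟨⟨_, j'⟩, hq, hqj⟩ := mem_tran.1 hj
    obtain ⟨rfl, rfl⟩ := Prod.mk.inj hqj
    rw [← hT.colAt_eq hq, add_zero]

theorem colAt_tran (hT : IsPattern w n T) (hi : i < n) :
    colAt (tran w 0 b T) i = (colAt T i + b) % w :=
  (hT.tran b).colAt_eq (mk_mem_tran (hT.colAt_mem hi))

theorem span_add_colAt_modEq (hT : IsPattern w n T) (hn : 0 < n) :
    span w n T + colAt T 0 ≡ colAt T (n - 1) [MOD w] := by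
  have hbot : colAt T 0 < w := hT.col_lt _ (hT.colAt_mem hn)
  calc span w n T + colAt T 0
      ≡ (colAt T (n - 1) + w - colAt T 0) + colAt T 0 [MOD w] := (Nat.mod_modEq _ _).add_right _
    _ = colAt T (n - 1) + w := Nat.sub_add_cancel (by omega)
    _ ≡ colAt T (n - 1) [MOD w] := Nat.add_mod_right _ _

theorem span_tran (hT : IsPattern w n T) (hn : 0 < n) (b : ℕ) :
    span w n (tran w 0 b T) = span w n T := by
  have hw : 0 < w := Nat.zero_lt_of_lt (hT.col_lt _ (hT.colAt_mem hn))
  have hspan : span w n (tran w 0 b T) + (colAt T 0 + b)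
      ≡ span w n T + (colAt T 0 + b) [MOD w] :=
    calc span w n (tran w 0 b T) + (colAt T 0 + b)
        ≡ span w n (tran w 0 b T) + colAt (tran w 0 b T) 0 [MOD w] := by
          rw [hT.colAt_tran hn]
          exact (Nat.mod_modEq _ _).symm.add_left _
      _ ≡ colAt (tran w 0 b T) (n - 1) [MOD w] := (hT.tran b).span_add_colAt_modEq hn
      _ ≡ colAt T (n - 1) + b [MOD w] := by
          rw [hT.colAt_tran (by omega)]
          exact Nat.mod_modEq _ _
      _ ≡ (span w n T + colAt T 0) + b [MOD w] := (hT.span_add_colAt_modEq hn).symm.add_right b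
      _ = span w n T + (colAt T 0 + b) := add_assoc _ _ _
  exact (hspan.add_right_cancel' _).eq_of_lt_of_lt (Nat.mod_lt _ hw) (Nat.mod_lt _ hw)

theorem modEq_of_mem_tran_of_mem_tran (hT : IsPattern w n T) (hb : p ∈ tran w a b T)
    (hc : p ∈ tran w a c T) : b ≡ c [MOD w] := by
  obtain ⟨⟨i, j⟩, hj, rfl⟩ := mem_tran.1 hb
  obtain ⟨⟨i', j'⟩, hj', heq⟩ := mem_tran.1 hc
  obtain ⟨hrow, hcol⟩ := Prod.mk.inj heq
  obtain rfl : i' = i := Nat.add_right_cancel hrow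
  obtain rfl : j' = j := hT.col_eq hj' hj
  exact Nat.ModEq.add_left_cancel' j' hcol.symm

end IsPattern

/-- The part of `T` in the rows below row `n`. -/
def lowerHalf (n : ℕ) (T : Finset (ℕ × ℕ)) : Finset (ℕ × ℕ) := T.filter fun p => p.1 < n

/-- The part of `T` in the rows from row `n` on, moved down by `n` rows. -/
noncomputable def upperHalf (n : ℕ) (T : Finset (ℕ × ℕ)) : Finset (ℕ × ℕ) :=
  T.preimage (Prod.map (· + n) id) ((add_left_injective n).prodMap Function.injective_id).injOn

section Halves

variable {w n c : ℕ} {S T : Finset (ℕ × ℕ)} {p : ℕ × ℕ}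

theorem mem_lowerHalf : p ∈ lowerHalf n T ↔ p ∈ T ∧ p.1 < n := Finset.mem_filter

theorem mem_upperHalf : p ∈ upperHalf n T ↔ (p.1 + n, p.2) ∈ T := Finset.mem_preimage

theorem mem_iff_mem_upperHalf (hp : n ≤ p.1) : p ∈ T ↔ (p.1 - n, p.2) ∈ upperHalf n T := by
  rw [mem_upperHalf, Nat.sub_add_cancel hp]

theorem lowerHalf_subset_lowerHalf (n : ℕ) (h : S ⊆ T) : lowerHalf n S ⊆ lowerHalf n T :=
  Finset.filter_subset_filter _ h

theorem upperHalf_subset_upperHalf (n : ℕ) (h : S ⊆ T) : upperHalf n S ⊆ upperHalf n T :=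
  fun _ hp => mem_upperHalf.2 (h (mem_upperHalf.1 hp))

theorem eq_of_halves_eq (hlow : lowerHalf n S = lowerHalf n T)
    (hup : upperHalf n S = upperHalf n T) : S = T := by
  ext p
  rcases lt_or_ge p.1 n with hp | hp
  · have hmem := congrArg (p ∈ ·) hlow
    simpa only [mem_lowerHalf, hp, and_true, eq_iff_iff] using hmem
  · rw [mem_iff_mem_upperHalf hp, hup, ← mem_iff_mem_upperHalf hp]

theorem card_lowerHalf_add_card_upperHalf (n : ℕ) (T : Finset (ℕ × ℕ)) :
    (lowerHalf n T).card + (upperHalf n T).card = T.card := by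
  have hup : (upperHalf n T).card = (T.filter fun p => ¬ p.1 < n).card := by
    classical
    rw [upperHalf, Finset.card_preimage]
    congr 1
    refine Finset.filter_congr fun p _ => ⟨?_, fun hp => ⟨(p.1 - n, p.2), ?_⟩⟩
    · rintro ⟨q, rfl⟩
      exact Nat.not_lt.2 (Nat.le_add_left n q.1)
    · exact Prod.ext (Nat.sub_add_cancel (Nat.not_lt.1 hp)) rfl
  rw [hup]
  exact Finset.card_filter_add_card_filter_not _

theorem IsPattern.of_halves (hlow : IsPattern w n (lowerHalf n T))
    (hup : IsPattern w n (upperHalf n T)) : IsPattern w (n + n) T where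
  row_lt p hp := by
    by_contra! hge
    have := hup.row_lt _ ((mem_iff_mem_upperHalf (by omega)).1 hp)
    omega
  col_lt p hp := by
    rcases lt_or_ge p.1 n with hlt | hge
    · exact hlow.col_lt p (mem_lowerHalf.2 ⟨hp, hlt⟩)
    · exact hup.col_lt (p.1 - n, p.2) ((mem_iff_mem_upperHalf hge).1 hp)
  existsUnique_col i hi := by
    rcases lt_or_ge i n with hlt | hge
    · simpa only [mem_lowerHalf, hlt, and_true] using hlow.existsUnique_col i hlt
    · simpa only [mem_upperHalf, Nat.sub_add_cancel hge] using
        hup.existsUnique_col (i - n) (by omega)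

/-- The pattern of height `2 n` obtained by putting the copy of `S` translated by `c` columns on
top of `S`. -/
def stack (w n c : ℕ) (S : Finset (ℕ × ℕ)) : Finset (ℕ × ℕ) := S ∪ tran w n c S

theorem lowerHalf_stack (hS : ∀ p ∈ S, p.1 < n) : lowerHalf n (stack w n c S) = S := by
  ext p
  simp only [stack, mem_lowerHalf, Finset.mem_union, mem_tran]
  constructor
  · rintro ⟨hp | ⟨q, -, rfl⟩, hlt⟩
    · exact hp
    · exact absurd hlt (Nat.not_lt.2 (Nat.le_add_left n q.1))
  · exact fun hp => ⟨Or.inl hp, hS p hp⟩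

theorem upperHalf_stack (hS : ∀ p ∈ S, p.1 < n) :
    upperHalf n (stack w n c S) = tran w 0 c S := by
  ext p
  simp only [stack, mem_upperHalf, Finset.mem_union, mem_tran, Prod.ext_iff, add_zero,
    Nat.add_right_cancel_iff]
  exact or_iff_right fun hp => Nat.not_lt.2 (Nat.le_add_left n p.1) (hS _ hp)

protected theorem IsPattern.stack (hS : IsPattern w n S) (c : ℕ) :
    IsPattern w (n + n) (stack w n c S) :=
  .of_halves (by rwa [lowerHalf_stack hS.row_lt])
    (by rw [upperHalf_stack hS.row_lt]; exact hS.tran c)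

theorem tran_stack (b : ℕ) : tran w 0 b (stack w n c S) = stack w n c (tran w 0 b S) := by
  simp only [stack, tran_union, tran_tran, add_zero, add_comm]

end Halves

section FHT

variable {w k : ℕ} {A B T : Finset (ℕ × ℕ)} {p : ℕ × ℕ}

theorem mem_FHT_zero : T ∈ FHT w 0 ↔ ∃ j < w, {(0, j)} = T := by
  simp only [FHT, Finset.mem_image, Finset.mem_range]

theorem mem_FHT_succ : T ∈ FHT w (k + 1) ↔ ∃ S ∈ FHT w k, ∃ s ∈ ({0, 1} : Finset ℕ),
    stack w (2 ^ k) (span w (2 ^ k) S + s) S = T := by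
  simp only [FHT, stack, Finset.mem_image, Finset.mem_product, Prod.exists, and_assoc,
    exists_and_left]

theorem FHT_nonempty (hw : 0 < w) (k : ℕ) : (FHT w k).Nonempty := by
  induction k with
  | zero => exact ⟨_, mem_FHT_zero.2 ⟨0, hw, rfl⟩⟩
  | succ k ih =>
    obtain ⟨S, hS⟩ := ih
    exact ⟨_, mem_FHT_succ.2 ⟨S, hS, 0, Finset.mem_insert_self 0 {1}, rfl⟩⟩

theorem isPattern_of_mem_FHT (hT : T ∈ FHT w k) : IsPattern w (2 ^ k) T := by
  induction k generalizing T with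
  | zero =>
    obtain ⟨j, hj, rfl⟩ := mem_FHT_zero.1 hT
    constructor <;> simp [hj]
  | succ k ih =>
    obtain ⟨S, hS, s, -, rfl⟩ := mem_FHT_succ.1 hT
    rw [pow_succ, mul_two]
    exact (ih hS).stack _

theorem tran_mem_FHT (hT : T ∈ FHT w k) (b : ℕ) : tran w 0 b T ∈ FHT w k := by
  induction k generalizing T with
  | zero =>
    obtain ⟨j, hj, rfl⟩ := mem_FHT_zero.1 hT
    exact mem_FHT_zero.2 ⟨(j + b) % w, Nat.mod_lt _ (Nat.zero_lt_of_lt hj), rfl⟩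
  | succ k ih =>
    obtain ⟨S, hS, s, hs, rfl⟩ := mem_FHT_succ.1 hT
    refine mem_FHT_succ.2 ⟨tran w 0 b S, ih hS, s, hs, ?_⟩
    rw [(isPattern_of_mem_FHT hS).span_tran (Nat.two_pow_pos k), tran_stack]

theorem lowerHalf_mem_FHT (hT : T ∈ FHT w (k + 1)) : lowerHalf (2 ^ k) T ∈ FHT w k := by
  obtain ⟨S, hS, s, -, rfl⟩ := mem_FHT_succ.1 hT
  rwa [lowerHalf_stack (isPattern_of_mem_FHT hS).row_lt]

theorem exists_upperHalf_eq_tran (hT : T ∈ FHT w (k + 1)) : ∃ s ∈ ({0, 1} : Finset ℕ),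
    upperHalf (2 ^ k) T =
      tran w 0 (span w (2 ^ k) (lowerHalf (2 ^ k) T) + s) (lowerHalf (2 ^ k) T) := by
  obtain ⟨S, hS, s, hs, rfl⟩ := mem_FHT_succ.1 hT
  have hrow := (isPattern_of_mem_FHT hS).row_lt
  exact ⟨s, hs, by rw [lowerHalf_stack hrow, upperHalf_stack hrow]⟩

theorem upperHalf_mem_FHT (hT : T ∈ FHT w (k + 1)) : upperHalf (2 ^ k) T ∈ FHT w k := by
  obtain ⟨s, -, hup⟩ := exists_upperHalf_eq_tran hT
  exact hup ▸ tran_mem_FHT (lowerHalf_mem_FHT hT) _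

theorem span_upperHalf (hT : T ∈ FHT w (k + 1)) :
    span w (2 ^ k) (upperHalf (2 ^ k) T) = span w (2 ^ k) (lowerHalf (2 ^ k) T) := by
  obtain ⟨s, -, hup⟩ := exists_upperHalf_eq_tran hT
  rw [hup, (isPattern_of_mem_FHT (lowerHalf_mem_FHT hT)).span_tran (Nat.two_pow_pos k)]

theorem eq_of_upperHalf_eq_of_eq_tran {b : ℕ} (hA : A ∈ FHT w (k + 1)) (hB : B ∈ FHT w (k + 1))
    (h : upperHalf (2 ^ k) A = upperHalf (2 ^ k) B)
    (hbA : upperHalf (2 ^ k) A = tran w 0 b (lowerHalf (2 ^ k) A))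
    (hbB : upperHalf (2 ^ k) B = tran w 0 b (lowerHalf (2 ^ k) B)) : A = B :=
  eq_of_halves_eq
    (tran_injOn (isPattern_of_mem_FHT (lowerHalf_mem_FHT hA)).col_lt
      (isPattern_of_mem_FHT (lowerHalf_mem_FHT hB)).col_lt (hbA.symm.trans (h.trans hbB))) h

theorem eq_of_lowerHalf_eq_of_mem_upperHalf (hA : A ∈ FHT w (k + 1)) (hB : B ∈ FHT w (k + 1))
    (h : lowerHalf (2 ^ k) A = lowerHalf (2 ^ k) B) (hpA : p ∈ upperHalf (2 ^ k) A)
    (hpB : p ∈ upperHalf (2 ^ k) B) : A = B := by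
  obtain ⟨s, -, hupA⟩ := exists_upperHalf_eq_tran hA
  obtain ⟨t, -, hupB⟩ := exists_upperHalf_eq_tran hB
  rw [h] at hupA
  rw [hupA] at hpA
  rw [hupB] at hpB
  have hshift := (isPattern_of_mem_FHT (lowerHalf_mem_FHT hB)).modEq_of_mem_tran_of_mem_tran hpA hpB
  exact eq_of_halves_eq h (by rw [hupA, hupB, tran_congr hshift])

theorem eq_of_upperHalf_eq_of_mem_lowerHalf (hA : A ∈ FHT w (k + 1)) (hB : B ∈ FHT w (k + 1))
    (h : upperHalf (2 ^ k) A = upperHalf (2 ^ k) B) (hpA : p ∈ lowerHalf (2 ^ k) A)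
    (hpB : p ∈ lowerHalf (2 ^ k) B) : A = B := by
  obtain ⟨s, -, hupA⟩ := exists_upperHalf_eq_tran hA
  obtain ⟨t, -, hupB⟩ := exists_upperHalf_eq_tran hB
  set b := span w (2 ^ k) (lowerHalf (2 ^ k) A) + s
  set c := span w (2 ^ k) (lowerHalf (2 ^ k) B) + t
  have hmemA : (p.1 + 0, (p.2 + b) % w) ∈ upperHalf (2 ^ k) B := h ▸ hupA ▸ mk_mem_tran hpA
  have hmemB : (p.1 + 0, (p.2 + c) % w) ∈ upperHalf (2 ^ k) B := hupB ▸ mk_mem_tran hpB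
  have hshift : b ≡ c [MOD w] := Nat.ModEq.add_left_cancel' p.2
    ((isPattern_of_mem_FHT (upperHalf_mem_FHT hB)).col_eq hmemA hmemB)
  exact eq_of_upperHalf_eq_of_eq_tran hA hB h (hupA.trans (tran_congr hshift)) hupB

end FHT

section Counting

variable {α β γ : Type*} [DecidableEq β] {M : Finset α} {f : α → β} {g : α → γ}

theorem card_le_card_mul_card_image {t : Finset γ} (hg : ∀ x ∈ M, g x ∈ t)
    (h : ∀ x ∈ M, ∀ y ∈ M, f x = f y → g x = g y → x = y) :
    M.card ≤ t.card * (M.image f).card := by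
  rw [mul_comm, ← Finset.card_product]
  refine Finset.card_le_card_of_injOn (fun x => (f x, g x))
    (fun x hx => Finset.mk_mem_product (Finset.mem_image_of_mem f hx) (hg x hx)) ?_
  exact fun x hx y hy hxy => h x hx y hy (congrArg Prod.fst hxy) (congrArg Prod.snd hxy)

theorem card_mul_add_le_two_mul [DecidableEq γ] {a b n : ℕ}
    (hf : M.card ≤ 2 * (M.image f).card) (hg : M.card ≤ 2 * (M.image g).card)
    (hf_inj : b ≠ 0 → Set.InjOn f M) (hg_inj : a ≠ 0 → Set.InjOn g M)
    (ha : (M.image f).card * a ≤ n) (hb : (M.image g).card * b ≤ n) :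
    M.card * (a + b) ≤ 2 * n := by
  rcases eq_or_ne a 0 with rfl | ha₀
  · calc M.card * (0 + b) ≤ 2 * (M.image g).card * b := by rw [zero_add]; gcongr
      _ = 2 * ((M.image g).card * b) := mul_assoc _ _ _
      _ ≤ 2 * n := by gcongr
  rcases eq_or_ne b 0 with rfl | hb₀
  · calc M.card * (a + 0) ≤ 2 * (M.image f).card * a := by rw [add_zero]; gcongr
      _ = 2 * ((M.image f).card * a) := mul_assoc _ _ _
      _ ≤ 2 * n := by gcongr
  rw [Finset.card_image_of_injOn (hf_inj hb₀)] at ha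
  rw [Finset.card_image_of_injOn (hg_inj ha₀)] at hb
  rw [mul_add, two_mul]
  exact add_le_add ha hb

end Counting

section SelfIntersection

variable {w k : ℕ} {M : Finset (Finset (ℕ × ℕ))} {I : Finset (ℕ × ℕ)}

theorem card_le_two_mul_card_image_lowerHalf (hM : M ⊆ FHT w (k + 1)) :
    M.card ≤ 2 * (M.image (lowerHalf (2 ^ k))).card := by
  choose! s hs hup using fun T (hT : T ∈ M) => exists_upperHalf_eq_tran (hM hT)
  refine card_le_card_mul_card_image hs fun A hA B hB hlow hshift => ?_
  exact eq_of_halves_eq hlow (by rw [hup A hA, hup B hB, hlow, hshift])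

theorem card_le_two_mul_card_image_upperHalf (hM : M ⊆ FHT w (k + 1)) :
    M.card ≤ 2 * (M.image (upperHalf (2 ^ k))).card := by
  choose! s hs hup using fun T (hT : T ∈ M) => exists_upperHalf_eq_tran (hM hT)
  refine card_le_card_mul_card_image hs fun A hA B hB h hshift => ?_
  refine eq_of_upperHalf_eq_of_eq_tran (hM hA) (hM hB) h (hup A hA) ?_
  rw [← span_upperHalf (hM hA), h, hshift, span_upperHalf (hM hB)]
  exact hup B hB

theorem injOn_lowerHalf (hM : M ⊆ FHT w (k + 1)) (hI : ∀ T ∈ M, I ⊆ T)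
    (hne : (upperHalf (2 ^ k) I).Nonempty) :
    Set.InjOn (lowerHalf (2 ^ k)) (M : Set (Finset (ℕ × ℕ))) := by
  obtain ⟨p, hp⟩ := hne
  exact fun A hA B hB h => eq_of_lowerHalf_eq_of_mem_upperHalf (hM hA) (hM hB) h
    (upperHalf_subset_upperHalf _ (hI A hA) hp) (upperHalf_subset_upperHalf _ (hI B hB) hp)

theorem injOn_upperHalf (hM : M ⊆ FHT w (k + 1)) (hI : ∀ T ∈ M, I ⊆ T)
    (hne : (lowerHalf (2 ^ k) I).Nonempty) :
    Set.InjOn (upperHalf (2 ^ k)) (M : Set (Finset (ℕ × ℕ))) := by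
  obtain ⟨p, hp⟩ := hne
  exact fun A hA B hB h => eq_of_upperHalf_eq_of_mem_lowerHalf (hM hA) (hM hB) h
    (lowerHalf_subset_lowerHalf _ (hI A hA) hp) (lowerHalf_subset_lowerHalf _ (hI B hB) hp)

theorem card_mul_card_le_one_of_subset_FHT_zero (hM : M ⊆ FHT w 0) (hI : ∀ T ∈ M, I ⊆ T) :
    M.card * I.card ≤ 1 := by
  rcases I.eq_empty_or_nonempty with rfl | ⟨p, hp⟩
  · simp only [Finset.card_empty, mul_zero, zero_le]
  have hM_eq : ∀ T ∈ M, T = {p} := by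
    intro T hT
    obtain ⟨j, -, rfl⟩ := mem_FHT_zero.1 (hM hT)
    rw [Finset.mem_singleton.1 (hI _ hT hp)]
  rcases M.eq_empty_or_nonempty with rfl | ⟨T, hT⟩
  · simp only [Finset.card_empty, zero_mul, zero_le]
  have hM_card : M.card ≤ 1 :=
    Finset.card_le_one.2 fun A hA B hB => (hM_eq A hA).trans (hM_eq B hB).symm
  have hI_card : I.card ≤ 1 := Finset.card_le_one_iff_subset_singleton.2 ⟨p, hM_eq T hT ▸ hI T hT⟩
  exact Nat.mul_le_mul hM_card hI_card

theorem card_mul_card_le_of_subset_FHT (hM : M ⊆ FHT w k) (hI : ∀ T ∈ M, I ⊆ T) :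
    M.card * I.card ≤ 2 ^ k := by
  induction k generalizing M I with
  | zero => exact card_mul_card_le_one_of_subset_FHT_zero hM hI
  | succ k ih =>
    have hlow : (M.image (lowerHalf (2 ^ k))).card * (lowerHalf (2 ^ k) I).card ≤ 2 ^ k :=
      ih (Finset.image_subset_iff.2 fun T hT => lowerHalf_mem_FHT (hM hT))
        (Finset.forall_mem_image.2 fun T hT => lowerHalf_subset_lowerHalf _ (hI T hT))
    have hup : (M.image (upperHalf (2 ^ k))).card * (upperHalf (2 ^ k) I).card ≤ 2 ^ k :=
      ih (Finset.image_subset_iff.2 fun T hT => upperHalf_mem_FHT (hM hT))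
        (Finset.forall_mem_image.2 fun T hT => upperHalf_subset_upperHalf _ (hI T hT))
    rw [← card_lowerHalf_add_card_upperHalf (2 ^ k) I, pow_succ']
    exact card_mul_add_le_two_mul
      (card_le_two_mul_card_image_lowerHalf hM) (card_le_two_mul_card_image_upperHalf hM)
      (fun h => injOn_lowerHalf hM hI (Finset.card_ne_zero.1 h))
      (fun h => injOn_upperHalf hM hI (Finset.card_ne_zero.1 h)) hlow hup

theorem interF_subset {T : Finset (ℕ × ℕ)} (hT : T ∈ M) : interF M ⊆ T :=
  fun _ hp => (Finset.mem_filter.1 hp).2 T hT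

theorem interF_singleton (T : Finset (ℕ × ℕ)) : interF {T} = T := by
  ext p
  simp only [interF, Finset.sup_singleton, id, Finset.mem_filter, Finset.mem_singleton,
    forall_eq, and_self]

end SelfIntersection

/-- For `h = 2 ^ d` and `w ≥ 2`, the self-intersection measure of the FHT pattern set
satisfies `r(H_{h,w}) = h`: every nonempty subfamily `M ⊆ H_{h,w}` has intersection area
`S(M) = |M| · |⋂_{T ∈ M} T| ≤ h`, and this value is attained. -/
theorem fht_self_intersection (w d : ℕ) (hw : 2 ≤ w) :
    (∀ M ⊆ FHT w d, M.Nonempty → M.card * (interF M).card ≤ 2 ^ d) ∧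
    (∃ M ⊆ FHT w d, M.Nonempty ∧ M.card * (interF M).card = 2 ^ d) := by
  refine ⟨fun M hM _ => card_mul_card_le_of_subset_FHT hM fun _ hT => interF_subset hT, ?_⟩
  obtain ⟨T, hT⟩ := FHT_nonempty (by omega : 0 < w) d
  refine ⟨{T}, Finset.singleton_subset_iff.2 hT, Finset.singleton_nonempty T, ?_⟩
  rw [interF_singleton, Finset.card_singleton, one_mul, (isPattern_of_mem_FHT hT).card_eq]
end

section
/- Let h = 2^d with d ∈ ℕ and w ≥ 2. Every binary-union straight-line program computing the FHT pattern set H_{h,w} has at least log₉(8) · w·h·log₂(h) steps; i.e. OR2(H_{h,w}) ≥ log₉(8)·w·h·log₂(h). Consequently, computing all the sums Σ_{p∈T} p for T ∈ H_{h,w} by binary additions also requires at least log₉(8)·w·h·log₂(h) additions. -/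
/-- An admissible operand of step `t` of a binary-union straight-line program
`s : Fin g → Finset α`: a singleton pixel or some earlier step. -/
def IsOperand {α : Type*} {g : ℕ} (s : Fin g → Finset α) (t : Fin g) (A : Finset α) : Prop :=
  (∃ p, A = {p}) ∨ ∃ u, u < t ∧ A = s u

/-- `s` is a binary-union straight-line program: each step is the union of two admissible
operands. -/
def ValidProg {α : Type*} [DecidableEq α] {g : ℕ} (s : Fin g → Finset α) : Prop :=
  ∀ t, ∃ A B, IsOperand s t A ∧ IsOperand s t B ∧ s t = A ∪ B

/-- The program `s` computes the pattern family `𝒯`: every pattern of `𝒯` is a singleton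
or appears among the steps of `s`. -/
def Computes {α : Type*} {g : ℕ} (s : Fin g → Finset α) (𝒯 : Finset (Finset α)) : Prop :=
  ∀ T ∈ 𝒯, (∃ p, T = {p}) ∨ ∃ t, s t = T

/-- `OR2 𝒯` is the minimal number of steps (binary gates) over all binary-union
straight-line programs computing `𝒯`. -/
noncomputable def OR2 {α : Type*} [DecidableEq α] (𝒯 : Finset (Finset α)) : ℕ :=
  sInf {g | ∃ s : Fin g → Finset α, ValidProg s ∧ Computes s 𝒯}

/-!
In a program computing a pattern `T`, start at the gate of `T` and descend towards a pixel `p ∈ T`,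
choosing at every gate an operand that contains `p`. The size drops from `|T|` to `1`, so the
gains `log₂ (|s v| / |chosen operand|)` along the path sum to `log₂ |T|`. Summed over its pixels,
a gate `s v` accounts for a total gain of at most `|s v|` (it has only two operands), and only
gates `s v ⊆ T` are visited; hence `|T| log₂ |T| ≤ ∑ |s v|` over the gates `s v ⊆ T`.

Now sum over all `T` in the family. At most `2 ^ d / |S|` FHT patterns contain a given set `S`. This
follows by induction on `d`, splitting `S` into its parts in the lower and the upper half of the
rows: a pattern is determined by either of its halves and the last shift, and that shift is forced
once the other half meets `S`. So every gate is charged at most `2 ^ d` in total, while the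
left-hand sides add up to `w * 2 ^ d * (2 ^ d * d)`, and there are at least `w * 2 ^ d * d` gates.
-/

open Finset

section Programs

variable {α : Type*} {g : ℕ} {s : Fin g → Finset α} {𝒯 : Finset (Finset α)}

lemma IsOperand.snoc {t : Fin g} {A : Finset α} (h : IsOperand s t A) (C : Finset α) :
    IsOperand (Fin.snoc (α := fun _ => Finset α) s C) t.castSucc A := by
  rcases h with h | ⟨u, hut, rfl⟩
  · exact .inl h
  · exact .inr ⟨u.castSucc, hut, by rw [Fin.snoc_castSucc]⟩

lemma Computes.isOperand_last (hc : Computes s 𝒯) {A : Finset α} (hA : A ∈ 𝒯) (C : Finset α) :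
    IsOperand (Fin.snoc (α := fun _ => Finset α) s C) (Fin.last g) A := by
  rcases hc A hA with h | ⟨t, rfl⟩
  · exact .inl h
  · exact .inr ⟨t.castSucc, t.castSucc_lt_last, by rw [Fin.snoc_castSucc]⟩

variable [DecidableEq α]

lemma ValidProg.snoc_union (hs : ValidProg s) {A B : Finset α} (hc : Computes s {A, B}) :
    ValidProg (Fin.snoc (α := fun _ => Finset α) s (A ∪ B)) := by
  refine Fin.lastCases ?_ fun t => ?_
  · exact ⟨A, B, hc.isOperand_last (by simp) _, hc.isOperand_last (by simp) _, Fin.snoc_last _ _⟩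
  · obtain ⟨A', B', hA', hB', ht⟩ := hs t
    exact ⟨A', B', hA'.snoc _, hB'.snoc _, by rw [Fin.snoc_castSucc, ht]⟩

lemma Computes.snoc (hc : Computes s 𝒯) (A : Finset α) :
    Computes (Fin.snoc (α := fun _ => Finset α) s A) (insert A 𝒯) := by
  refine (forall_mem_insert _ _ _).2 ⟨.inr ⟨Fin.last g, Fin.snoc_last _ _⟩, fun T hT => ?_⟩
  exact (hc T hT).imp_right fun ⟨t, ht⟩ => ⟨t.castSucc, by rw [Fin.snoc_castSucc, ht]⟩

lemma ValidProg.exists_computes_insert (hs : ValidProg s) (hc : Computes s 𝒯) {T : Finset α}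
    (hT : T.Nonempty) :
    ∃ (g' : ℕ) (s' : Fin g' → Finset α), ValidProg s' ∧ Computes s' (insert T 𝒯) := by
  induction hT using Finset.Nonempty.cons_induction with
  | singleton a => exact ⟨g, s, hs, (forall_mem_insert _ _ _).2 ⟨.inl ⟨a, rfl⟩, hc⟩⟩
  | cons a T ha _ ih =>
    obtain ⟨g', s', hs', hc'⟩ := ih
    have hpair : Computes s' {{a}, T} := by
      simpa [Computes] using hc' T (mem_insert_self _ _)
    refine ⟨g' + 1, _, hs'.snoc_union hpair, fun U hU => ?_⟩
    rw [cons_eq_insert, insert_eq] at hU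
    exact hc'.snoc ({a} ∪ T) U (insert_subset_insert _ (subset_insert _ _) hU)

lemma exists_validProg_computes (h𝒯 : ∀ T ∈ 𝒯, T.Nonempty) :
    ∃ (g : ℕ) (s : Fin g → Finset α), ValidProg s ∧ Computes s 𝒯 := by
  induction 𝒯 using Finset.induction_on with
  | empty => exact ⟨0, Fin.elim0, fun t => t.elim0, by simp [Computes]⟩
  | insert T 𝒯 _ ih =>
    obtain ⟨hT, h𝒯⟩ := (forall_mem_insert _ _ _).1 h𝒯
    obtain ⟨g, s, hs, hc⟩ := ih h𝒯
    exact hs.exists_computes_insert hc hT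

lemma exists_validProg_computes_OR2 (h𝒯 : ∀ T ∈ 𝒯, T.Nonempty) :
    ∃ s : Fin (OR2 𝒯) → Finset α, ValidProg s ∧ Computes s 𝒯 :=
  Nat.sInf_mem (s := {g | ∃ s : Fin g → Finset α, ValidProg s ∧ Computes s 𝒯})
    (exists_validProg_computes h𝒯)

end Programs

section Entropy

variable {α : Type*} [DecidableEq α] {A B : Finset α} {p : α}

/-- The operand of the gate `A ∪ B` chosen when descending towards the pixel `p ∈ A ∪ B`; ties are
broken in favour of `A`. -/
def operandToward (A B : Finset α) (p : α) : Finset α := if p ∈ A then A else B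

lemma mem_operandToward (hp : p ∈ A ∪ B) : p ∈ operandToward A B p := by
  unfold operandToward
  split_ifs with h
  · exact h
  · exact (mem_union.1 hp).resolve_left h

lemma operandToward_subset_union (A B : Finset α) (p : α) : operandToward A B p ⊆ A ∪ B := by
  unfold operandToward
  split_ifs
  · exact subset_union_left
  · exact subset_union_right

lemma card_operandToward_pos (hp : p ∈ A ∪ B) : 0 < #(operandToward A B p) :=
  card_pos.2 ⟨p, mem_operandToward hp⟩

/-- The number of bits by which the logarithm of the size drops in one descent step from the gate
`A ∪ B` towards the pixel `p`. -/
noncomputable def descentGain (A B : Finset α) (p : α) : ℝ :=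
  Real.logb 2 (#(A ∪ B) / #(operandToward A B p))

lemma descentGain_nonneg (hp : p ∈ A ∪ B) : 0 ≤ descentGain A B p := by
  refine Real.logb_nonneg one_lt_two ((one_le_div₀ ?_).2 ?_)
  · exact_mod_cast card_operandToward_pos hp
  · exact_mod_cast card_le_card (operandToward_subset_union A B p)

lemma descentGain_add_logb_card_operandToward (hp : p ∈ A ∪ B) :
    descentGain A B p + Real.logb 2 #(operandToward A B p) = Real.logb 2 #(A ∪ B) := by
  rw [descentGain, Real.logb_div (mod_cast (card_pos.2 ⟨p, hp⟩).ne')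
    (mod_cast (card_operandToward_pos hp).ne'), sub_add_cancel]

lemma sum_inv_card_operandToward_le_two (A B : Finset α) :
    ∑ p ∈ A ∪ B, (#(operandToward A B p) : ℝ)⁻¹ ≤ 2 := by
  have hA : ∑ p ∈ A, (#(operandToward A B p) : ℝ)⁻¹ ≤ 1 := by
    rw [sum_congr rfl fun p hp => by rw [operandToward, if_pos hp], sum_const, nsmul_eq_mul]
    exact mul_inv_le_one
  have hB : ∑ p ∈ B \ A, (#(operandToward A B p) : ℝ)⁻¹ ≤ 1 := by
    rw [sum_congr rfl fun p hp => by rw [operandToward, if_neg (mem_sdiff.1 hp).2], sum_const,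
      nsmul_eq_mul, ← div_eq_mul_inv]
    exact div_le_one_of_le₀ (mod_cast card_le_card sdiff_subset) (by positivity)
  rw [← union_sdiff_self_eq_union, sum_union disjoint_sdiff]
  linarith

lemma sum_descentGain_le_card (A B : Finset α) :
    ∑ p ∈ A ∪ B, descentGain A B p ≤ #(A ∪ B) := by
  set n := (#(A ∪ B) : ℝ) with hn_def
  have log_div_le : ∀ p ∈ A ∪ B, Real.log (n / #(operandToward A B p)) ≤
      (Real.log 2 - 1) + n / 2 * (#(operandToward A B p) : ℝ)⁻¹ := by
    intro p hp
    have hn : 0 < n := Nat.cast_pos.2 (card_pos.2 ⟨p, hp⟩)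
    have ha : (0 : ℝ) < #(operandToward A B p) := Nat.cast_pos.2 (card_operandToward_pos hp)
    have hlog := Real.log_le_sub_one_of_pos (div_pos (div_pos hn ha) two_pos)
    rw [Real.log_div (by positivity) two_ne_zero] at hlog
    linarith [show n / #(operandToward A B p) / 2 = n / 2 * (#(operandToward A B p) : ℝ)⁻¹ by ring]
  simp only [descentGain, ← hn_def, Real.logb, ← sum_div]
  rw [div_le_iff₀ (Real.log_pos one_lt_two)]
  calc ∑ p ∈ A ∪ B, Real.log (n / #(operandToward A B p))
      ≤ ∑ p ∈ A ∪ B, ((Real.log 2 - 1) + n / 2 * (#(operandToward A B p) : ℝ)⁻¹) :=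
        sum_le_sum log_div_le
    _ = n * (Real.log 2 - 1) + n / 2 * ∑ p ∈ A ∪ B, (#(operandToward A B p) : ℝ)⁻¹ := by
        rw [sum_add_distrib, sum_const, nsmul_eq_mul, mul_sum]
    _ ≤ n * (Real.log 2 - 1) + n / 2 * 2 := by
        gcongr
        exact sum_inv_card_operandToward_le_two A B
    _ = n * Real.log 2 := by ring

variable {g : ℕ} {s : Fin g → Finset α}

lemma logb_card_le_sum_descentGain {A B : Fin g → Finset α} (hA : ∀ t, IsOperand s t (A t))
    (hB : ∀ t, IsOperand s t (B t)) (hs : ∀ t, s t = A t ∪ B t) (t : Fin g) (hp : p ∈ s t) :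
    Real.logb 2 #(s t) ≤
      ∑ v ∈ Iic t with p ∈ s v ∧ s v ⊆ s t, descentGain (A v) (B v) p := by
  induction t using WellFoundedLT.induction with
  | _ t ih =>
  have gain_nonneg : ∀ v, p ∈ s v → 0 ≤ descentGain (A v) (B v) p :=
    fun v hv => descentGain_nonneg (hs v ▸ hv)
  have hpt : p ∈ A t ∪ B t := hs t ▸ hp
  have logb_operand_le : Real.logb 2 #(operandToward (A t) (B t) p) ≤
      ∑ v ∈ Iio t with p ∈ s v ∧ s v ⊆ s t, descentGain (A v) (B v) p := by
    have hop : IsOperand s t (operandToward (A t) (B t) p) := by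
      unfold operandToward
      split_ifs
      exacts [hA t, hB t]
    rcases hop with ⟨q, hq⟩ | ⟨u, hut, hu⟩
    · rw [hq, card_singleton, Nat.cast_one, Real.logb_one]
      exact sum_nonneg fun v hv => gain_nonneg v (mem_filter.1 hv).2.1
    · have hpu : p ∈ s u := hu ▸ mem_operandToward hpt
      have hsub : s u ⊆ s t := hs t ▸ hu ▸ operandToward_subset_union (A t) (B t) p
      rw [hu]
      refine (ih u hut hpu).trans (sum_le_sum_of_subset_of_nonneg ?_ ?_)
      · intro v hv
        simp only [mem_filter, mem_Iic, mem_Iio] at hv ⊢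
        exact ⟨hv.1.trans_lt hut, hv.2.1, hv.2.2.trans hsub⟩
      · exact fun v hv _ => gain_nonneg v (mem_filter.1 hv).2.1
  rw [← Iio_insert, filter_insert, if_pos ⟨hp, subset_rfl⟩, sum_insert (by simp), hs t,
    ← descentGain_add_logb_card_operandToward hpt, ← hs t]
  gcongr

lemma ValidProg.card_mul_logb_card_le (hs : ValidProg s) (t : Fin g) :
    (#(s t) : ℝ) * Real.logb 2 #(s t) ≤ ∑ v with s v ⊆ s t, (#(s v) : ℝ) := by
  choose A B hA hB hunion using hs
  calc (#(s t) : ℝ) * Real.logb 2 #(s t)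
      = ∑ _p ∈ s t, Real.logb 2 #(s t) := by rw [sum_const, nsmul_eq_mul]
    _ ≤ ∑ p ∈ s t, ∑ v ∈ Iic t with p ∈ s v ∧ s v ⊆ s t, descentGain (A v) (B v) p :=
        sum_le_sum fun _ hp => logb_card_le_sum_descentGain hA hB hunion t hp
    _ = ∑ v ∈ Iic t with s v ⊆ s t, ∑ p ∈ s v, descentGain (A v) (B v) p := by
        refine sum_comm' fun p v => ?_
        simp only [mem_filter]
        exact ⟨fun ⟨_, hv, hpv, hsub⟩ => ⟨hpv, hv, hsub⟩,
          fun ⟨hpv, hv, hsub⟩ => ⟨hsub hpv, hv, hpv, hsub⟩⟩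
    _ ≤ ∑ v ∈ Iic t with s v ⊆ s t, (#(s v) : ℝ) := by
        refine sum_le_sum fun v _ => ?_
        simpa only [← hunion v] using sum_descentGain_le_card (A v) (B v)
    _ ≤ ∑ v with s v ⊆ s t, (#(s v) : ℝ) :=
        sum_le_sum_of_subset_of_nonneg (filter_subset_filter _ (subset_univ _))
          fun _ _ _ => Nat.cast_nonneg _

lemma Computes.card_mul_logb_card_le {𝒯 : Finset (Finset α)} (hc : Computes s 𝒯)
    (hs : ValidProg s) {T : Finset α} (hT : T ∈ 𝒯) :
    (#T : ℝ) * Real.logb 2 #T ≤ ∑ v with s v ⊆ T, (#(s v) : ℝ) := by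
  rcases hc T hT with ⟨p, rfl⟩ | ⟨t, rfl⟩
  · rw [card_singleton, Nat.cast_one, Real.logb_one, mul_zero]
    exact sum_nonneg fun _ _ => Nat.cast_nonneg _
  · exact hs.card_mul_logb_card_le t

theorem sum_card_mul_logb_card_le_mul_OR2 {𝒯 : Finset (Finset α)} {m : ℕ}
    (h𝒯 : ∀ T ∈ 𝒯, T.Nonempty) (hm : ∀ S : Finset α, #{T ∈ 𝒯 | S ⊆ T} * #S ≤ m) :
    ∑ T ∈ 𝒯, (#T : ℝ) * Real.logb 2 #T ≤ m * OR2 𝒯 := by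
  obtain ⟨s, hs, hc⟩ := exists_validProg_computes_OR2 h𝒯
  calc ∑ T ∈ 𝒯, (#T : ℝ) * Real.logb 2 #T
      ≤ ∑ T ∈ 𝒯, ∑ v with s v ⊆ T, (#(s v) : ℝ) :=
        sum_le_sum fun T hT => hc.card_mul_logb_card_le hs hT
    _ = ∑ v, ∑ T ∈ 𝒯 with s v ⊆ T, (#(s v) : ℝ) := sum_comm' (by simp)
    _ = ∑ v, ((#{T ∈ 𝒯 | s v ⊆ T} * #(s v) : ℕ) : ℝ) := by
        simp only [sum_const, nsmul_eq_mul, Nat.cast_mul]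
    _ ≤ ∑ _v : Fin (OR2 𝒯), (m : ℝ) := sum_le_sum fun v _ => mod_cast hm (s v)
    _ = m * OR2 𝒯 := by rw [sum_const, card_fin, nsmul_eq_mul, mul_comm]

end Entropy

/-- A code of an FHT pattern of height `2 ^ k`: the column of its bottom pixel, and the extra shifts
`s ∈ {0, 1}` chosen at the `k` doubling steps, in the order of construction. -/
abbrev FHTCode (w k : ℕ) := ZMod w × (Fin k → Fin 2)

/-- The column of row `i` relative to the bottom row, in the FHT pattern with shifts `σ`. -/
def fhtOffset (w : ℕ) : ∀ {k : ℕ}, (Fin k → Fin 2) → ℕ → ZMod w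
  | 0, _, _ => 0
  | k + 1, σ, i =>
      if i < 2 ^ k then fhtOffset w (Fin.init σ) i
      else fhtOffset w (Fin.init σ) (i - 2 ^ k) +
        (fhtOffset w (Fin.init σ) (2 ^ k - 1) + (σ (Fin.last k) : ℕ))

lemma fhtOffset_bottom (w : ℕ) {k : ℕ} (σ : Fin k → Fin 2) : fhtOffset w σ 0 = 0 := by
  induction k with
  | zero => rfl
  | succ k ih => rw [fhtOffset, if_pos (Nat.two_pow_pos k), ih]

lemma natCast_fin_two_injective {w : ℕ} (hw : 2 ≤ w) :
    Function.Injective fun s : Fin 2 => ((s : ℕ) : ZMod w) := fun s t hst =>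
  Fin.ext (CharP.natCast_injOn_Iio (ZMod w) w (s.2.trans_le hw) (t.2.trans_le hw) hst)

namespace FHTCode

variable {w k : ℕ}

/-- The column of the pattern coded by `x` in row `i`. -/
def column (x : FHTCode w k) (i : ℕ) : ZMod w := x.1 + fhtOffset w x.2 i

/-- The code of the lower half of a pattern. -/
def lower (x : FHTCode w (k + 1)) : FHTCode w k := (x.1, Fin.init x.2)

/-- The code of the upper half of a pattern, moved down to row `0`. -/
def upper (x : FHTCode w (k + 1)) : FHTCode w k :=
  (x.1 + (fhtOffset w (Fin.init x.2) (2 ^ k - 1) + (x.2 (Fin.last k) : ℕ)), Fin.init x.2)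

lemma column_bottom (x : FHTCode w k) : x.column 0 = x.1 := by
  rw [column, fhtOffset_bottom, add_zero]

lemma column_of_lt (x : FHTCode w (k + 1)) {i : ℕ} (hi : i < 2 ^ k) :
    x.column i = x.lower.column i := by
  rw [column, fhtOffset, if_pos hi, column, lower]

lemma column_two_pow_add (x : FHTCode w (k + 1)) (i : ℕ) :
    x.column (2 ^ k + i) = x.upper.column i := by
  rw [column, fhtOffset, if_neg (by lia), Nat.add_sub_cancel_left, column, upper]
  ring

lemma upper_column_eq (x : FHTCode w (k + 1)) (i : ℕ) :
    x.upper.column i = x.lower.column i +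
      (fhtOffset w x.lower.2 (2 ^ k - 1) + (x.2 (Fin.last k) : ℕ)) := by
  simp only [column, upper, lower]
  ring

lemma eq_of_lower_eq {x y : FHTCode w (k + 1)} (hl : x.lower = y.lower)
    (hlast : x.2 (Fin.last k) = y.2 (Fin.last k)) : x = y := by
  obtain ⟨hbot, hinit⟩ := Prod.mk.inj hl
  refine Prod.ext hbot ?_
  rw [← Fin.snoc_init_self x.2, ← Fin.snoc_init_self y.2, hinit, hlast]

lemma eq_of_upper_eq {x y : FHTCode w (k + 1)} (hu : x.upper = y.upper)
    (hlast : x.2 (Fin.last k) = y.2 (Fin.last k)) : x = y := by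
  obtain ⟨hbot, hinit⟩ := Prod.mk.inj hu
  rw [hinit, hlast] at hbot
  exact eq_of_lower_eq (Prod.ext (add_right_cancel hbot) hinit) hlast

lemma eq_of_lower_eq_of_upper_column_eq (hw : 2 ≤ w) {x y : FHTCode w (k + 1)} {i : ℕ}
    (hl : x.lower = y.lower) (hu : x.upper.column i = y.upper.column i) : x = y := by
  rw [upper_column_eq, upper_column_eq, hl] at hu
  exact eq_of_lower_eq hl (natCast_fin_two_injective hw (add_left_cancel (add_left_cancel hu)))

lemma eq_of_upper_eq_of_lower_column_eq (hw : 2 ≤ w) {x y : FHTCode w (k + 1)} {i : ℕ}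
    (hu : x.upper = y.upper) (hl : x.lower.column i = y.lower.column i) : x = y := by
  have hinit : x.lower.2 = y.lower.2 := (Prod.mk.inj hu).2
  have hcol : x.upper.column i = y.upper.column i := by rw [hu]
  rw [upper_column_eq, upper_column_eq, hl, hinit] at hcol
  exact eq_of_upper_eq hu (natCast_fin_two_injective hw (add_left_cancel (add_left_cancel hcol)))

section Counting

variable [NeZero w]

variable (w k) in
/-- The codes of the patterns that have the prescribed columns `c i` in the rows `i < 2 ^ k`
satisfying `R`. -/
def matching (c : ℕ → ZMod w) (R : ℕ → Prop) [DecidablePred R] : Finset (FHTCode w k) :=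
  {x | ∀ i < 2 ^ k, R i → x.column i = c i}

variable {c : ℕ → ZMod w} {R : ℕ → Prop} [DecidablePred R]

lemma mem_matching {x : FHTCode w k} :
    x ∈ matching w k c R ↔ ∀ i < 2 ^ k, R i → x.column i = c i := by
  simp only [matching, mem_filter, mem_univ, true_and]

lemma lower_mem_matching {x : FHTCode w (k + 1)} (hx : x ∈ matching w (k + 1) c R) :
    x.lower ∈ matching w k c R := by
  refine mem_matching.2 fun i hi hR => ?_
  rw [← column_of_lt x hi]
  exact mem_matching.1 hx i (hi.trans (Nat.pow_lt_pow_succ one_lt_two)) hR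

lemma upper_mem_matching {x : FHTCode w (k + 1)} (hx : x ∈ matching w (k + 1) c R) :
    x.upper ∈ matching w k (fun i => c (2 ^ k + i)) (fun i => R (2 ^ k + i)) := by
  refine mem_matching.2 fun i hi hR => ?_
  rw [← column_two_pow_add]
  exact mem_matching.1 hx _ (by rw [Nat.two_pow_succ]; lia) hR

lemma card_matching_succ_le_card_mul_two {S : Finset (FHTCode w k)}
    (f : FHTCode w (k + 1) → FHTCode w k) (hf : ∀ x ∈ matching w (k + 1) c R, f x ∈ S)
    (hinj : ∀ ⦃x y⦄, f x = f y → x.2 (Fin.last k) = y.2 (Fin.last k) → x = y) :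
    #(matching w (k + 1) c R) ≤ #S * 2 := by
  rw [← card_fin 2, ← card_product]
  refine card_le_card_of_injOn (fun x => (f x, x.2 (Fin.last k))) (fun x hx => ?_) ?_
  · exact mem_product.2 ⟨hf x hx, mem_univ _⟩
  · exact fun x _ y _ hxy => hinj (Prod.mk.inj hxy).1 (Prod.mk.inj hxy).2

lemma card_matching_succ_le_lower_mul_two :
    #(matching w (k + 1) c R) ≤ #(matching w k c R) * 2 :=
  card_matching_succ_le_card_mul_two lower (fun _ => lower_mem_matching) fun _ _ => eq_of_lower_eq

lemma card_matching_succ_le_upper_mul_two :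
    #(matching w (k + 1) c R) ≤
      #(matching w k (fun i => c (2 ^ k + i)) fun i => R (2 ^ k + i)) * 2 :=
  card_matching_succ_le_card_mul_two upper (fun _ => upper_mem_matching) fun _ _ => eq_of_upper_eq

lemma card_matching_succ_le_lower (hw : 2 ≤ w) {i : ℕ} (hi : i < 2 ^ k) (hR : R (2 ^ k + i)) :
    #(matching w (k + 1) c R) ≤ #(matching w k c R) := by
  refine card_le_card_of_injOn lower (fun _ => lower_mem_matching) fun x hx y hy hxy =>
    eq_of_lower_eq_of_upper_column_eq (i := i) hw hxy ?_
  rw [mem_matching.1 (upper_mem_matching hx) i hi hR,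
    mem_matching.1 (upper_mem_matching hy) i hi hR]

lemma card_matching_succ_le_upper (hw : 2 ≤ w) {i : ℕ} (hi : i < 2 ^ k) (hR : R i) :
    #(matching w (k + 1) c R) ≤
      #(matching w k (fun i => c (2 ^ k + i)) fun i => R (2 ^ k + i)) := by
  refine card_le_card_of_injOn upper (fun _ => upper_mem_matching) fun x hx y hy hxy =>
    eq_of_upper_eq_of_lower_column_eq (i := i) hw hxy ?_
  rw [mem_matching.1 (lower_mem_matching hx) i hi hR,
    mem_matching.1 (lower_mem_matching hy) i hi hR]

lemma card_matching_zero_le_one (hR : R 0) : #(matching w 0 c R) ≤ 1 := by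
  refine card_le_one.2 fun x hx y hy => Prod.ext ?_ (Subsingleton.elim _ _)
  rw [← column_bottom x, ← column_bottom y, mem_matching.1 hx 0 one_pos hR,
    mem_matching.1 hy 0 one_pos hR]

theorem card_matching_mul_count_le (hw : 2 ≤ w) (k : ℕ) (c : ℕ → ZMod w) (R : ℕ → Prop)
    [DecidablePred R] : #(matching w k c R) * Nat.count R (2 ^ k) ≤ 2 ^ k := by
  induction k generalizing c R with
  | zero =>
    by_cases hR : R 0
    · exact Nat.mul_le_mul (card_matching_zero_le_one hR) (Nat.count_le R)
    · have hcount : Nat.count R (2 ^ 0) = 0 :=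
        Nat.count_iff_forall_not.2 fun i hi => Nat.lt_one_iff.1 hi ▸ hR
      simp only [hcount, mul_zero, zero_le]
  | succ k ih =>
    set cU := fun i => c (2 ^ k + i)
    set RU := fun i => R (2 ^ k + i)
    have ihL := ih c R
    have ihU := ih cU RU
    rw [Nat.two_pow_succ, Nat.count_add]
    rcases eq_or_ne (Nat.count R (2 ^ k)) 0 with hL | hL
    · rw [hL, zero_add]
      exact (Nat.mul_le_mul_right _ card_matching_succ_le_upper_mul_two).trans (by linarith)
    rcases eq_or_ne (Nat.count RU (2 ^ k)) 0 with hU | hU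
    · rw [hU, add_zero]
      exact (Nat.mul_le_mul_right _ card_matching_succ_le_lower_mul_two).trans (by linarith)
    obtain ⟨i, hi, hRi⟩ := Nat.count_ne_iff_exists.1 hL
    obtain ⟨j, hj, hRj⟩ := Nat.count_ne_iff_exists.1 hU
    rw [mul_add]
    exact add_le_add
      ((Nat.mul_le_mul_right _ (card_matching_succ_le_lower hw hj hRj)).trans ihL)
      ((Nat.mul_le_mul_right _ (card_matching_succ_le_upper hw hi hRi)).trans ihU)

end Counting

/-- The FHT pattern coded by `x`. -/
def pattern (x : FHTCode w k) : Finset (ℕ × ℕ) :=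
  (range (2 ^ k)).image fun i => (i, (x.column i).val)

lemma mem_pattern {x : FHTCode w k} {p : ℕ × ℕ} :
    p ∈ x.pattern ↔ p.1 < 2 ^ k ∧ (x.column p.1).val = p.2 := by
  simp only [pattern, mem_image, mem_range]
  exact ⟨by rintro ⟨i, hi, rfl⟩; exact ⟨hi, rfl⟩, fun ⟨hi, hp⟩ => ⟨p.1, hi, Prod.ext rfl hp⟩⟩

lemma card_pattern (x : FHTCode w k) : #x.pattern = 2 ^ k := by
  rw [pattern, card_image_of_injective _ fun _ _ hij => (Prod.mk.inj hij).1, card_range]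

lemma colAt_pattern (x : FHTCode w k) {i : ℕ} (hi : i < 2 ^ k) :
    colAt x.pattern i = (x.column i).val := by
  have row_eq : x.pattern.filter (fun p => p.1 = i) = {(i, (x.column i).val)} := by
    ext p
    simp only [mem_filter, mem_pattern, mem_singleton]
    constructor
    · rintro ⟨⟨-, hp⟩, rfl⟩
      exact Prod.ext rfl hp.symm
    · rintro rfl
      exact ⟨⟨hi, rfl⟩, rfl⟩
  rw [colAt, row_eq, image_singleton, sup_singleton, id]

lemma natCast_span_pattern [NeZero w] (x : FHTCode w k) :
    (span w (2 ^ k) x.pattern : ZMod w) = fhtOffset w x.2 (2 ^ k - 1) := by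
  have hpos := Nat.two_pow_pos k
  rw [span, colAt_pattern x (by lia), colAt_pattern x hpos, column_bottom, ZMod.natCast_mod,
    Nat.cast_sub ((ZMod.val_lt x.1).le.trans (Nat.le_add_left _ _)), Nat.cast_add,
    ZMod.natCast_self, ZMod.natCast_zmod_val, ZMod.natCast_zmod_val, column]
  ring

lemma tran_pattern_lower [NeZero w] (x : FHTCode w (k + 1)) :
    tran w (2 ^ k) (span w (2 ^ k) x.lower.pattern + x.2 (Fin.last k)) x.lower.pattern =
      (range (2 ^ k)).image fun i => (2 ^ k + i, (x.column (2 ^ k + i)).val) := by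
  rw [tran, pattern, image_image]
  refine image_congr fun i _ => Prod.ext (add_comm _ _) ?_
  simp only [Function.comp_apply]
  rw [← ZMod.val_natCast, Nat.cast_add, Nat.cast_add, ← pattern, natCast_span_pattern,
    ZMod.natCast_zmod_val, column_two_pow_add, upper_column_eq]

lemma pattern_succ [NeZero w] (x : FHTCode w (k + 1)) :
    x.pattern = x.lower.pattern ∪
      tran w (2 ^ k) (span w (2 ^ k) x.lower.pattern + x.2 (Fin.last k)) x.lower.pattern := by
  rw [tran_pattern_lower, pattern, Nat.two_pow_succ, range_add_eq_union, image_union, map_eq_image,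
    image_image]
  congr 1
  exact image_congr fun i hi => by rw [column_of_lt x (mem_range.1 hi)]

lemma card_filter_subset_pattern_mul_card_le [NeZero w] (hw : 2 ≤ w) (k : ℕ) (S : Finset (ℕ × ℕ)) :
    #{x : FHTCode w k | S ⊆ x.pattern} * #S ≤ 2 ^ k := by
  rcases eq_empty_or_nonempty {x : FHTCode w k | S ⊆ x.pattern} with hempty | ⟨y, hy⟩
  · rw [hempty, card_empty, zero_mul]
    exact Nat.zero_le _
  have hSy : S ⊆ y.pattern := (mem_filter.1 hy).2
  have card_le_count : #S ≤ Nat.count (fun i => i ∈ S.image Prod.fst) (2 ^ k) := by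
    rw [Nat.count_eq_card_filter_range]
    refine card_le_card_of_injOn Prod.fst (fun p hp => ?_) fun p hp q hq hpq => ?_
    · exact mem_filter.2 ⟨mem_range.2 (mem_pattern.1 (hSy hp)).1, mem_image_of_mem _ hp⟩
    · exact Prod.ext hpq <| by
        rw [← (mem_pattern.1 (hSy hp)).2, ← (mem_pattern.1 (hSy hq)).2, hpq]
  have subset_matching : ({x : FHTCode w k | S ⊆ x.pattern} : Finset _) ⊆
      matching w k y.column (fun i => i ∈ S.image Prod.fst) := by
    refine fun x hx => mem_matching.2 fun i _ hiS => ?_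
    obtain ⟨p, hp, rfl⟩ := mem_image.1 hiS
    apply ZMod.val_injective w
    rw [(mem_pattern.1 (hSy hp)).2, (mem_pattern.1 ((mem_filter.1 hx).2 hp)).2]
  exact (Nat.mul_le_mul (card_le_card subset_matching) card_le_count).trans
    (card_matching_mul_count_le hw k _ _)

lemma pattern_injective [NeZero w] (hw : 2 ≤ w) :
    Function.Injective (pattern : FHTCode w k → Finset (ℕ × ℕ)) := by
  intro x y hxy
  have hmul := card_filter_subset_pattern_mul_card_le hw k x.pattern
  rw [card_pattern] at hmul
  have hcard := Nat.le_of_mul_le_mul_right (hmul.trans_eq (one_mul _).symm) (Nat.two_pow_pos k)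
  exact card_le_one.1 hcard x (by simp) y (by simp [hxy])

end FHTCode

open FHTCode

lemma FHT_eq_image_pattern (w k : ℕ) [NeZero w] :
    FHT w k = (univ : Finset (FHTCode w k)).image pattern := by
  induction k with
  | zero =>
    ext T
    simp only [FHT, mem_image, mem_range, mem_univ, true_and]
    constructor
    · rintro ⟨j, hj, rfl⟩
      exact ⟨(j, Fin.elim0), by simp [pattern, column_bottom, ZMod.val_cast_of_lt hj]⟩
    · rintro ⟨x, rfl⟩
      exact ⟨x.1.val, ZMod.val_lt _, by simp [pattern, column_bottom]⟩
  | succ k ih =>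
    ext T
    simp only [FHT, ih, mem_image, mem_product, mem_univ, true_and, Prod.exists]
    constructor
    · rintro ⟨_, s, ⟨⟨b, σ, rfl⟩, hs⟩, rfl⟩
      have hs2 : s < 2 := by rw [mem_insert, mem_singleton] at hs; lia
      refine ⟨b, Fin.snoc σ ⟨s, hs2⟩, ?_⟩
      rw [pattern_succ]
      simp only [lower, Fin.init_snoc, Fin.snoc_last]
    · rintro ⟨b, σ, rfl⟩
      refine ⟨_, σ (Fin.last k), ⟨⟨b, Fin.init σ, rfl⟩, ?_⟩, (pattern_succ (b, σ)).symm⟩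
      rw [mem_insert, mem_singleton]
      lia

lemma card_of_mem_FHT {w k : ℕ} [NeZero w] {T : Finset (ℕ × ℕ)} (hT : T ∈ FHT w k) :
    #T = 2 ^ k := by
  rw [FHT_eq_image_pattern] at hT
  obtain ⟨x, -, rfl⟩ := mem_image.1 hT
  exact card_pattern x

lemma card_FHT {w : ℕ} (hw : 2 ≤ w) (k : ℕ) : #(FHT w k) = w * 2 ^ k := by
  have : NeZero w := ⟨by lia⟩
  rw [FHT_eq_image_pattern, card_image_of_injective _ (pattern_injective hw), card_univ,
    Fintype.card_prod, ZMod.card, Fintype.card_fun, Fintype.card_fin, Fintype.card_fin]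

lemma card_filter_subset_FHT_mul_card_le {w : ℕ} (hw : 2 ≤ w) (k : ℕ) (S : Finset (ℕ × ℕ)) :
    #{T ∈ FHT w k | S ⊆ T} * #S ≤ 2 ^ k := by
  have : NeZero w := ⟨by lia⟩
  rw [FHT_eq_image_pattern, filter_image]
  exact (Nat.mul_le_mul_right _ card_image_le).trans
    (card_filter_subset_pattern_mul_card_le hw k S)

theorem fht_or2_lower_general (w d : ℕ) (hw : 2 ≤ w) : w * 2 ^ d * d ≤ OR2 (FHT w d) := by
  have : NeZero w := ⟨by lia⟩
  have nonempty_of_mem : ∀ T ∈ FHT w d, T.Nonempty := fun T hT =>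
    card_pos.1 (card_of_mem_FHT hT ▸ Nat.two_pow_pos d)
  have hsum := sum_card_mul_logb_card_le_mul_OR2 nonempty_of_mem
    (card_filter_subset_FHT_mul_card_le hw d)
  rw [sum_congr rfl fun T hT => by rw [card_of_mem_FHT hT], sum_const, card_FHT hw, nsmul_eq_mul,
    Nat.cast_pow, Nat.cast_two, Real.logb_pow, Real.logb_self_eq_one one_lt_two, mul_one,
    mul_left_comm] at hsum
  exact_mod_cast le_of_mul_le_mul_left hsum (by positivity)

lemma logb_nine_eight_le_one : Real.logb 9 8 ≤ 1 :=
  (Real.logb_le_iff_le_rpow (by norm_num) (by norm_num)).2 (by norm_num)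

/-- For `h = 2 ^ d` and `w ≥ 2`, every binary-union straight-line program computing the
FHT pattern set `H_{h,w}` has at least `log₉ 8 · w · h · log₂ h = log₉ 8 · w · 2 ^ d · d`
steps, i.e. `OR2(H_{h,w}) ≥ log₉ 8 · w · h · log₂ h`. -/
theorem fht_or2_lower (w d : ℕ) (hw : 2 ≤ w) :
    Real.logb 9 8 * (w : ℝ) * (2 ^ d : ℝ) * (d : ℝ) ≤ (OR2 (FHT w d) : ℝ) := by
  have hbound : (w * 2 ^ d * d : ℝ) ≤ OR2 (FHT w d) := mod_cast fht_or2_lower_general w d hw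
  rw [mul_assoc, mul_assoc, ← mul_assoc (w : ℝ)]
  exact (mul_le_of_le_one_left (by positivity) logb_nine_eight_le_one).trans hbound
end
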